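/- Suppose r and ℓ are both even and each pair (u_i,v_i), i = 1,2, generates conjugation-invariant brickwork MPUs and satisfies either (Case I) conj(u_i) = u_i and conj(v_i) = v_i, or (Case II) conj(u_i) = (Σ_ℓ⊗Σ_r)u_i and conj(v_i) = v_i(Σ_r⊗Σ_ℓ). Then (u₁,v₁) and (u₂,v₂) are strictly equivalent under conjugation if and only if they belong to the same case and det(u₁) = det(u₂) and det(v₁) = det(v₂). -/

import Mathlib

/-!
For unitary `u`, `v` put `A = conj(u) u†`. Conjugation invariance on rings of one and two cells
forces `A` to be a product `a ⊗ b` (`schmidt_one`, `exists_kronecker`). Since `A` is symmetric,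
`aᵀ = ±a`. The pair `(a, b)` is unique up to a scalar, so this sign and, for `r` and `ℓ` even, the
number `δ = det(a)^(r/2) det(b)^(ℓ/2)` depend on `A` only, and continuously
(`continuousOn_of_entry`, `detRoot`). As `δ² = det A = det(u)⁻²`, the number `δ det(u)` is `±1`, and
so is `det(u) det(v)` by invariance on one cell. Along a path these three signs are therefore
constant. At an endpoint they are unaffected by the gauge transformation, and for a pair in normal
form they equal `1` (Case I) or `-1` (Case II), `det(u)`, and `det(u) det(v)` (`endpoint`).

Conversely, for pairs in the same case the matrices `u₁† u₂` and `v₂ v₁†` are real orthogonal, of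
determinant one if the determinants of the pairs agree. They are joined to `1` in the special
orthogonal group (`joined_one_of_det_eq_one`), and multiplying `u₁`, `v₁` by such a path preserves
the normal form, which implies conjugation invariance (`conjInvariant_of_form`).
-/

open scoped Kronecker Matrix

/-- The cyclic successor on `Fin N`. -/
def nextIdx {N : ℕ} (n : Fin N) : Fin N := ⟨(n.val + 1) % N, Nat.mod_lt _ n.pos⟩

/-- The brickwork MPU `U^{(N)}[u,v]` on a ring of `2N` spins of dimension `d`. -/
noncomputable def brickwork (d l r : ℕ)
    (u : Matrix (Fin l × Fin r) (Fin d × Fin d) ℂ)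
    (v : Matrix (Fin d × Fin d) (Fin r × Fin l) ℂ) (N : ℕ) :
    Matrix (Fin N → Fin d × Fin d) (Fin N → Fin d × Fin d) ℂ :=
  Matrix.of fun x y =>
    ∑ z : Fin N → Fin l × Fin r,
      (∏ n : Fin N, v ((x n).2, (x (nextIdx n)).1) ((z n).2, (z (nextIdx n)).1)) *
      (∏ n : Fin N, u (z n) (y n))

/-- `u` and `v` are both unitary. -/
def IsUnitaryPair (d l r : ℕ) (u : Matrix (Fin l × Fin r) (Fin d × Fin d) ℂ)
    (v : Matrix (Fin d × Fin d) (Fin r × Fin l) ℂ) : Prop :=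
  uᴴ * u = 1 ∧ u * uᴴ = 1 ∧ vᴴ * v = 1 ∧ v * vᴴ = 1

/-- The brickwork MPUs generated by `(u,v)` are invariant under entrywise conjugation. -/
def ConjInvariant (d l r : ℕ) (u : Matrix (Fin l × Fin r) (Fin d × Fin d) ℂ)
    (v : Matrix (Fin d × Fin d) (Fin r × Fin l) ℂ) : Prop :=
  ∀ N : ℕ, 1 ≤ N → (brickwork d l r u v N).map (starRingEnd ℂ) = brickwork d l r u v N

/-- Gauge freedom of the standard form. -/
def GaugeRelated (d l r : ℕ) (u : Matrix (Fin l × Fin r) (Fin d × Fin d) ℂ)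
    (v : Matrix (Fin d × Fin d) (Fin r × Fin l) ℂ)
    (u' : Matrix (Fin l × Fin r) (Fin d × Fin d) ℂ)
    (v' : Matrix (Fin d × Fin d) (Fin r × Fin l) ℂ) : Prop :=
  ∃ (x : Matrix (Fin l) (Fin l) ℂ) (y : Matrix (Fin r) (Fin r) ℂ),
    x ∈ Matrix.unitaryGroup (Fin l) ℂ ∧ y ∈ Matrix.unitaryGroup (Fin r) ℂ ∧
    u' = (x ⊗ₖ y) * u ∧ v' = v * (yᴴ ⊗ₖ xᴴ)

/-- Strict equivalence under conjugation symmetry. -/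
def StrictEquivConj (d l r : ℕ)
    (u₁ : Matrix (Fin l × Fin r) (Fin d × Fin d) ℂ)
    (v₁ : Matrix (Fin d × Fin d) (Fin r × Fin l) ℂ)
    (u₂ : Matrix (Fin l × Fin r) (Fin d × Fin d) ℂ)
    (v₂ : Matrix (Fin d × Fin d) (Fin r × Fin l) ℂ) : Prop :=
  ∃ (u : ℝ → Matrix (Fin l × Fin r) (Fin d × Fin d) ℂ)
    (v : ℝ → Matrix (Fin d × Fin d) (Fin r × Fin l) ℂ),
    ContinuousOn u (Set.Icc 0 1) ∧ ContinuousOn v (Set.Icc 0 1) ∧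
    (∀ t ∈ Set.Icc (0:ℝ) 1, IsUnitaryPair d l r (u t) (v t)) ∧
    GaugeRelated d l r u₁ v₁ (u 0) (v 0) ∧
    GaugeRelated d l r u₂ v₂ (u 1) (v 1) ∧
    (∀ t ∈ Set.Icc (0:ℝ) 1, ConjInvariant d l r (u t) (v t))

/-- The standard skew-symmetric form `Σ_n = 1_{n/2} ⊗ Y`, with `Y = [[0,1],[-1,0]]`. -/
noncomputable def stdSymplectic (n : ℕ) : Matrix (Fin n) (Fin n) ℂ :=
  Matrix.of fun i j =>
    if i.val % 2 = 0 ∧ j.val = i.val + 1 then 1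
    else if j.val % 2 = 0 ∧ i.val = j.val + 1 then -1 else 0

/-- Case I of the normal form: `u` and `v` are real. -/
def CaseI (d l r : ℕ) (u : Matrix (Fin l × Fin r) (Fin d × Fin d) ℂ)
    (v : Matrix (Fin d × Fin d) (Fin r × Fin l) ℂ) : Prop :=
  u.map (starRingEnd ℂ) = u ∧ v.map (starRingEnd ℂ) = v

/-- Case II of the normal form: `conj u = (Σ_ℓ⊗Σ_r)u` and `conj v = v(Σ_r⊗Σ_ℓ)`. -/
def CaseII (d l r : ℕ) (u : Matrix (Fin l × Fin r) (Fin d × Fin d) ℂ)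
    (v : Matrix (Fin d × Fin d) (Fin r × Fin l) ℂ) : Prop :=
  u.map (starRingEnd ℂ) = (stdSymplectic l ⊗ₖ stdSymplectic r) * u ∧
  v.map (starRingEnd ℂ) = v * (stdSymplectic r ⊗ₖ stdSymplectic l)

/-- The identification of `ℂ^d⊗ℂ^d` with `ℂ^ℓ⊗ℂ^r` used to regard `u` and `v` as square
matrices. -/
def eqDD (d l r : ℕ) (h : r * l = d ^ 2) : (Fin d × Fin d) ≃ (Fin l × Fin r) :=
  (finProdFinEquiv.trans (finCongr (by rw [pow_two] at h; rw [← h, mul_comm]))).trans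
    finProdFinEquiv.symm

set_option linter.unusedSectionVars false

/-! ### Path-connectedness of the special orthogonal group -/

section Orthogonal
variable {n : Type*} [Fintype n] [DecidableEq n]

/-- The matrix of the reflection in the hyperplane orthogonal to `v`; it is `1` for `v = 0`, by the
convention `2 / 0 = 0`. -/
noncomputable def householder (v : n → ℝ) : Matrix n n ℝ :=
  1 - (2 / (v ⬝ᵥ v)) • Matrix.vecMulVec v v

lemma dotProduct_self_ne {n : Type*} [Fintype n] {v : n → ℝ} (hv : v ≠ 0) : v ⬝ᵥ v ≠ 0 := by
  simpa [dotProduct_self_eq_zero] using hv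

lemma householder_zero : householder (0 : n → ℝ) = 1 := by
  simp [householder]

lemma householder_transpose (v : n → ℝ) : (householder v)ᵀ = householder v := by
  simp [householder, Matrix.transpose_vecMulVec]

lemma householder_mul_self (v : n → ℝ) : householder v * householder v = 1 := by
  by_cases hv : v = 0
  · simp [hv, householder_zero]
  have h := dotProduct_self_ne hv
  have : Matrix.vecMulVec v v * Matrix.vecMulVec v v = (v ⬝ᵥ v) • Matrix.vecMulVec v v := by
    rw [Matrix.vecMulVec_mul_vecMulVec]
    ext i j
    simp [Matrix.vecMulVec_apply]
    ring
  simp only [householder, sub_mul, mul_sub, one_mul, mul_one, smul_mul_assoc, mul_smul_comm, this,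
    smul_smul]
  rw [div_mul_cancel₀ _ h]
  module

/-- The Householder matrix as an element of the orthogonal group. -/
noncomputable def householderO (v : n → ℝ) : Matrix.orthogonalGroup n ℝ :=
  ⟨householder v, by
    rw [Matrix.mem_orthogonalGroup_iff, householder_transpose, householder_mul_self]⟩

lemma householder_det {v : n → ℝ} (hv : v ≠ 0) : (householder v).det = -1 := by
  have h := dotProduct_self_ne hv
  have : householder v = 1 + Matrix.replicateCol Unit ((-(2 / (v ⬝ᵥ v))) • v) *
      Matrix.replicateRow Unit v := by
    ext i j
    simp [householder, Matrix.mul_apply, Matrix.vecMulVec_apply]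
    ring
  rw [this, Matrix.det_one_add_replicateCol_mul_replicateRow, dotProduct_smul, smul_eq_mul]
  field_simp
  ring

/-- Nonzero vectors form a path-connected set in dimension at least two. -/
lemma householderO_joined (hn : 1 < Fintype.card n) {v w : n → ℝ} (hv : v ≠ 0) (hw : w ≠ 0) :
    Joined (householderO v) (householderO w) := by
  have hr : 1 < Module.rank ℝ (n → ℝ) := by
    rw [rank_fun']; exact_mod_cast hn
  have hj : JoinedIn ({0}ᶜ : Set (n → ℝ)) v w :=
    (isPathConnected_compl_singleton_of_one_lt_rank hr 0).joinedIn v hv w hw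
  have hne : ∀ x : ({0}ᶜ : Set (n → ℝ)), x.1 ⬝ᵥ x.1 ≠ 0 := fun x => dotProduct_self_ne x.2
  have h1 : Continuous fun x : ({0}ᶜ : Set (n → ℝ)) => x.1 ⬝ᵥ x.1 :=
    continuous_subtype_val.dotProduct continuous_subtype_val
  have h2 : Continuous fun x : ({0}ᶜ : Set (n → ℝ)) => householder x.1 :=
    continuous_const.sub ((continuous_const.div h1 hne).smul
      (continuous_subtype_val.matrix_vecMulVec continuous_subtype_val))
  have h3 : Continuous fun x : ({0}ᶜ : Set (n → ℝ)) => householderO x.1 :=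
    Continuous.subtype_mk h2 _
  exact hj.joined_subtype.map h3

lemma toEuclideanCLM_householder (v x : EuclideanSpace ℝ n) :
    Matrix.toEuclideanCLM (n := n) (𝕜 := ℝ) (householder v.ofLp) x
      = (ℝ ∙ v)ᗮ.reflection x := by
  rw [Submodule.reflection_orthogonal_apply, Submodule.reflection_apply, 
    Submodule.starProjection_singleton]
  ext i
  have h1 : v.ofLp ⬝ᵥ v.ofLp = ‖v‖ ^ 2 := by
    rw [EuclideanSpace.real_norm_sq_eq]; simp [dotProduct, sq]
  have h2 : v.ofLp ⬝ᵥ x.ofLp = inner ℝ v x := by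
    simp [PiLp.inner_apply, dotProduct, mul_comm]
  simp only [Matrix.ofLp_toEuclideanCLM, householder, Matrix.sub_mulVec, Matrix.one_mulVec,
    Matrix.smul_mulVec, Matrix.vecMulVec_mulVec, h1, h2]
  simp
  ring

/-- The Cartan–Dieudonné theorem in matrix form. -/
lemma exists_householder_list (o : Matrix.orthogonalGroup n ℝ) :
    ∃ l : List (n → ℝ), o = (l.map householderO).prod := by
  have ho : Matrix.toEuclideanCLM (n := n) (𝕜 := ℝ) o.1 ∈
      unitary (EuclideanSpace ℝ n →L[ℝ] EuclideanSpace ℝ n) :=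
    Unitary.map_mem (Matrix.toEuclideanCLM (n := n) (𝕜 := ℝ)) o.2
  obtain ⟨l, -, hl⟩ := (Unitary.linearIsometryEquiv ⟨_, ho⟩).reflections_generate_dim
  refine ⟨l.map WithLp.ofLp, ?_⟩
  have key : ∀ (l : List (EuclideanSpace ℝ n)) (x : EuclideanSpace ℝ n),
      Matrix.toEuclideanCLM (n := n) (𝕜 := ℝ) ((l.map WithLp.ofLp).map householderO).prod.1 x =
        (l.map fun v => (ℝ ∙ v)ᗮ.reflection).prod x := by
    intro l
    induction l with
    | nil => intro x; simp
    | cons a l ih =>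
      intro x
      simp only [List.map_cons, List.prod_cons, Submonoid.coe_mul, map_mul,
        mul_apply_eq_comp, LinearIsometryEquiv.coe_mul, Function.comp_apply]
      rw [ih]
      exact toEuclideanCLM_householder a _
  apply Subtype.ext
  apply (Matrix.toEuclideanCLM (n := n) (𝕜 := ℝ)).injective
  ext1 x
  exact (congrArg (fun f => f x) hl).trans (key l x).symm

/-- Write `o` as a product of reflections and move all their axes to one vector `e` through nonzero
vectors. The number of reflections is even because `det o = 1`, so the endpoint is `1`. -/
theorem joined_one_of_det_eq_one (hn : 1 < Fintype.card n) (o : Matrix.orthogonalGroup n ℝ)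
    (ho : o.1.det = 1) : Joined 1 o := by
  obtain ⟨i⟩ : Nonempty n := Fintype.card_pos_iff.mp (by omega)
  have he : (Pi.single i 1 : n → ℝ) ≠ 0 := by simp
  set e : n → ℝ := Pi.single i 1
  have key : ∀ l : List (n → ℝ), ∃ k : ℕ,
      Joined (l.map householderO).prod (householderO e ^ k) ∧
        ((l.map householderO).prod).1.det = (-1) ^ k := by
    intro l
    induction l with
    | nil => exact ⟨0, by simpa using Joined.refl _, by simp⟩
    | cons a l ih =>
      obtain ⟨k, hk, hd⟩ := ih
      by_cases ha : a = 0
      · have : householderO a = 1 := Subtype.ext (by simp [ha, householderO, householder_zero])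
        exact ⟨k, by simpa [this] using hk, by simpa [this] using hd⟩
      · refine ⟨k + 1, ?_, ?_⟩
        · rw [List.map_cons, List.prod_cons, pow_succ']
          exact (householderO_joined hn ha he).mul hk
        · rw [List.map_cons, List.prod_cons, Submonoid.coe_mul, Matrix.det_mul, hd, pow_succ']
          congr 1
          exact householder_det ha
  obtain ⟨l, rfl⟩ := exists_householder_list o
  obtain ⟨k, hk, hd⟩ := key l
  rw [ho] at hd
  have hev : Even k := by
    by_contra h
    rw [(Nat.not_even_iff_odd.mp h).neg_one_pow] at hd
    norm_num at hd
  obtain ⟨m, rfl⟩ := hev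
  have hsq : householderO e * householderO e = 1 := Subtype.ext (householder_mul_self e)
  rw [← two_mul, pow_mul, sq, hsq, one_pow] at hk
  exact hk.symm

end Orthogonal

/-- `joined_one_of_det_eq_one` for orthogonal matrices regarded as real unitary matrices. -/
theorem exists_real_path {n : Type*} [Fintype n] [DecidableEq n] (hn : 1 < Fintype.card n)
    (o : Matrix n n ℂ) (hreal : o.map (starRingEnd ℂ) = o) (hun : o * oᴴ = 1) (hdet : o.det = 1) :
    ∃ f : ℝ → Matrix n n ℂ, Continuous f ∧ f 0 = 1 ∧ f 1 = o ∧
      ∀ t, (f t).map (starRingEnd ℂ) = f t ∧ f t * (f t)ᴴ = 1 := by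
  set p : Matrix n n ℝ := o.map Complex.re with hp
  have hpo : p.map Complex.ofReal = o := by
    ext i j
    have := congrFun (congrFun hreal i) j
    simp only [Matrix.map_apply] at this
    simpa [hp] using Complex.conj_eq_iff_re.mp this
  have hinj : Function.Injective fun M : Matrix n n ℝ => M.map Complex.ofReal :=
    Matrix.map_injective Complex.ofReal_injective
  have hstar : ∀ M : Matrix n n ℝ, (M.map Complex.ofReal)ᴴ = Mᵀ.map Complex.ofReal := by
    intro M; ext i j; simp
  have hmul : ∀ M K : Matrix n n ℝ, (M * K).map Complex.ofReal =
      M.map Complex.ofReal * K.map Complex.ofReal := by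
    intro M K; exact Matrix.map_mul (f := Complex.ofRealHom)
  have hone : (1 : Matrix n n ℝ).map Complex.ofReal = 1 := by
    ext i j; by_cases h : i = j <;> simp [Matrix.one_apply, h]
  have hpmem : p ∈ Matrix.orthogonalGroup n ℝ := by
    rw [Matrix.mem_orthogonalGroup_iff]
    apply hinj
    simp only
    rw [hmul, ← hstar, hpo, hun, hone]
  have hpdet : p.det = 1 := by
    apply Complex.ofReal_injective
    have := RingHom.map_det Complex.ofRealHom p
    rw [Complex.ofRealHom_eq_coe] at this
    rw [this]
    exact (congrArg Matrix.det hpo).trans hdet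
  obtain ⟨γ⟩ := joined_one_of_det_eq_one hn ⟨p, hpmem⟩ hpdet
  refine ⟨fun t => (γ.extend t).1.map Complex.ofReal, ?_, ?_, ?_, ?_⟩
  · exact (continuous_subtype_val.comp γ.continuous_extend).matrix_map Complex.continuous_ofReal
  · simp [hone]
  · simpa using hpo
  · intro t
    refine ⟨by ext i j; simp, ?_⟩
    rw [hstar, ← hmul, (Matrix.mem_orthogonalGroup_iff _ _).mp (γ.extend t).2, hone]

/-! ### Tensor powers and the brickwork -/

section Tensor

/-- The matrix `A = conj(u) u†`, characterised for unitary `u` by `conj(u) = A u`. -/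
noncomputable def cocycle {α β : Type*} [Fintype β] (u : Matrix α β ℂ) : Matrix α α ℂ :=
  u.map (starRingEnd ℂ) * uᴴ

/-- The `N`-fold tensor power `M ⊗ ⋯ ⊗ M` of a matrix. -/
noncomputable def bigKron {α β : Type*} (N : ℕ) (M : Matrix α β ℂ) :
    Matrix (Fin N → α) (Fin N → β) ℂ :=
  Matrix.of fun x y => ∏ n, M (x n) (y n)

lemma bigKron_mul {α β γ : Type*} [Fintype β] (N : ℕ) (A : Matrix α β ℂ) (B : Matrix β γ ℂ) :
    bigKron N (A * B) = bigKron N A * bigKron N B := by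
  classical
  ext x y
  simp only [bigKron, Matrix.of_apply, Matrix.mul_apply, ← Finset.prod_mul_distrib]
  rw [Finset.prod_univ_sum]
  simp

lemma bigKron_one {α : Type*} [DecidableEq α] (N : ℕ) :
    bigKron N (1 : Matrix α α ℂ) = 1 := by
  ext x y
  simp only [bigKron, Matrix.of_apply, Matrix.one_apply, Finset.prod_ite_zero]
  simp [funext_iff]

lemma bigKron_conjTranspose {α β : Type*} (N : ℕ) (A : Matrix α β ℂ) :
    bigKron N Aᴴ = (bigKron N A)ᴴ := by
  ext x y
  simp [bigKron]

lemma bigKron_conj {α β : Type*} (N : ℕ) (A : Matrix α β ℂ) :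
    bigKron N (A.map (starRingEnd ℂ)) = (bigKron N A).map (starRingEnd ℂ) := by
  ext x y
  simp [bigKron]

lemma nextIdx_injective (N : ℕ) : Function.Injective (nextIdx : Fin N → Fin N) := by
  intro a b h
  have h' : (a.val + 1) % N = (b.val + 1) % N := congrArg Fin.val h
  have ha := a.2
  have hb := b.2
  apply Fin.ext
  rcases Nat.lt_or_ge (a.val + 1) N with h1 | h1 <;> rcases Nat.lt_or_ge (b.val + 1) N with h2 | h2
  · rw [Nat.mod_eq_of_lt h1, Nat.mod_eq_of_lt h2] at h'; omega
  · have : b.val + 1 = N := by omega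
    rw [Nat.mod_eq_of_lt h1, this, Nat.mod_self] at h'; omega
  · have : a.val + 1 = N := by omega
    rw [Nat.mod_eq_of_lt h2, this, Nat.mod_self] at h'; omega
  · omega

/-- The cyclic successor as a permutation. -/
noncomputable def nextEquiv (N : ℕ) : Fin N ≃ Fin N :=
  Equiv.ofBijective nextIdx (Finite.injective_iff_bijective.mp (nextIdx_injective N))

/-- Regrouping of the ring of spins from the pairs `(2n-1, 2n)` to the pairs `(2n, 2n+1)`. -/
noncomputable def shift (N : ℕ) (α β : Type*) : (Fin N → α × β) ≃ (Fin N → β × α) where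
  toFun z n := ((z n).2, (z (nextEquiv N n)).1)
  invFun w n := ((w ((nextEquiv N).symm n)).2, (w n).1)
  left_inv z := by ext n <;> simp
  right_inv w := by ext n <;> simp

lemma brickwork_eq (d l r : ℕ) (u : Matrix (Fin l × Fin r) (Fin d × Fin d) ℂ)
    (v : Matrix (Fin d × Fin d) (Fin r × Fin l) ℂ) (N : ℕ) :
    brickwork d l r u v N = (bigKron N v).submatrix (shift N _ _) (shift N _ _) * bigKron N u := by
  ext x y
  simp [brickwork, bigKron, Matrix.mul_apply, shift, nextEquiv]

lemma bigKron_kronecker_shift {l r : ℕ} (N : ℕ) (σ : Matrix (Fin l) (Fin l) ℂ)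
    (τ : Matrix (Fin r) (Fin r) ℂ) :
    (bigKron N (τ ⊗ₖ σ)).submatrix (shift N _ _) (shift N _ _) = bigKron N (σ ⊗ₖ τ) := by
  ext x y
  simp only [bigKron, shift, Matrix.submatrix_apply, Matrix.of_apply, Equiv.coe_fn_mk,
    Matrix.kroneckerMap_apply, Finset.prod_mul_distrib]
  rw [Equiv.prod_comp (nextEquiv N) (fun n => σ (x n).1 (y n).1), mul_comm]

/-- The brickwork matrices of `(S u, v S')` and `(u, v)` agree when `S = σ ⊗ τ` is an involution,
because the tensor powers of `S` and of `S' = τ ⊗ σ` are the same operator on the ring. -/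
lemma conjInvariant_of_form {d l r : ℕ} {u : Matrix (Fin l × Fin r) (Fin d × Fin d) ℂ}
    {v : Matrix (Fin d × Fin d) (Fin r × Fin l) ℂ} {σ : Matrix (Fin l) (Fin l) ℂ}
    {τ : Matrix (Fin r) (Fin r) ℂ} (hS : (σ ⊗ₖ τ) * (σ ⊗ₖ τ) = 1)
    (hu : u.map (starRingEnd ℂ) = (σ ⊗ₖ τ) * u) (hv : v.map (starRingEnd ℂ) = v * (τ ⊗ₖ σ)) :
    ConjInvariant d l r u v := by
  intro N _
  rw [brickwork_eq, Matrix.map_mul, ← bigKron_conj, ← Matrix.submatrix_map, ← bigKron_conj, hu, hv,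
    bigKron_mul, bigKron_mul,
    ← Matrix.submatrix_mul_equiv (bigKron N v) _ _ (shift N _ _) _, bigKron_kronecker_shift,
    Matrix.mul_assoc, ← Matrix.mul_assoc (bigKron N (σ ⊗ₖ τ)), ← bigKron_mul, hS, bigKron_one,
    Matrix.one_mul]

/-- Conjugation invariance of the product of the two layers, with the `u` layer moved to one side
and the `v` layer to the other; `vᵀ v = conj(v)† v`. -/
lemma bigKron_symmetry {d l r : ℕ} {u : Matrix (Fin l × Fin r) (Fin d × Fin d) ℂ}
    {v : Matrix (Fin d × Fin d) (Fin r × Fin l) ℂ} (hU : IsUnitaryPair d l r u v)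
    (hC : ConjInvariant d l r u v) (N : ℕ) (hN : 1 ≤ N) :
    bigKron N (cocycle u) =
      (bigKron N (vᵀ * v)).submatrix (shift N _ _) (shift N _ _) := by
  have h := hC N hN
  obtain ⟨-, h2, h3, -⟩ := hU
  have h3' : vᵀ * v.map (starRingEnd ℂ) = 1 := by
    have := congrArg (fun M => M.map (starRingEnd ℂ)) h3
    simp only [Matrix.map_mul] at this
    convert this using 1
    · congr 1; ext i j; simp
    · ext i j; by_cases h : i = j <;> simp [Matrix.one_apply, h]
  rw [brickwork_eq, Matrix.map_mul, ← bigKron_conj, ← Matrix.submatrix_map, ← bigKron_conj] at h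
  have h' := congrArg (fun M => (bigKron N vᵀ).submatrix (shift N _ _) (shift N _ _) * M *
    bigKron N uᴴ) h
  rw [← Matrix.mul_assoc, Matrix.submatrix_mul_equiv, ← bigKron_mul, h3', bigKron_one,
    Matrix.submatrix_one_equiv, Matrix.one_mul, ← bigKron_mul, ← Matrix.mul_assoc,
    Matrix.submatrix_mul_equiv, ← bigKron_mul, Matrix.mul_assoc, ← bigKron_mul, h2, bigKron_one,
    Matrix.mul_one] at h'
  exact h'

lemma cocycle_eq_swap {d l r : ℕ} {u : Matrix (Fin l × Fin r) (Fin d × Fin d) ℂ}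
    {v : Matrix (Fin d × Fin d) (Fin r × Fin l) ℂ} (hU : IsUnitaryPair d l r u v)
    (hC : ConjInvariant d l r u v) (z z' : Fin l × Fin r) :
    cocycle u z z' = (vᵀ * v) (z.2, z.1) (z'.2, z'.1) := by
  have := congrFun (congrFun (bigKron_symmetry hU hC 1 le_rfl) (fun _ => z)) (fun _ => z')
  simpa only [bigKron, shift, Matrix.of_apply, Matrix.submatrix_apply, Finset.univ_unique,
    Finset.prod_singleton, Equiv.coe_fn_mk] using this

/-- `A = conj(u) u†` has operator Schmidt rank one. On a ring of two cells `A ⊗ A` equals the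
shifted `B ⊗ B`, and `B` is `A` with its factors swapped by `cocycle_eq_swap`. -/
lemma schmidt_one {d l r : ℕ} {u : Matrix (Fin l × Fin r) (Fin d × Fin d) ℂ}
    {v : Matrix (Fin d × Fin d) (Fin r × Fin l) ℂ} (hU : IsUnitaryPair d l r u v)
    (hC : ConjInvariant d l r u v) (i i' k k' : Fin l) (j j' m m' : Fin r) :
    cocycle u (i, j) (i', j') * cocycle u (k, m) (k', m') =
      cocycle u (k, j) (k', j') * cocycle u (i, m) (i', m') := by
  have e1 := cocycle_eq_swap hU hC
  have h2 := bigKron_symmetry hU hC 2 (by norm_num)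
  generalize cocycle u = A at *
  generalize vᵀ * v = B at *
  have := congrFun (congrFun h2 ![(i, j), (k, m)]) ![(i', j'), (k', m')]
  have n0 : nextEquiv 2 0 = 1 := rfl
  have n1 : nextEquiv 2 1 = 0 := rfl
  simp [bigKron, shift, Fin.prod_univ_two, n0, n1] at this
  rw [this, e1 (k, j), e1 (i, m)]

lemma exists_kronecker {l r : ℕ} {A : Matrix (Fin l × Fin r) (Fin l × Fin r) ℂ} (hA : A ≠ 0)
    (h : ∀ (i i' k k' : Fin l) (j j' m m' : Fin r),
      A (i, j) (i', j') * A (k, m) (k', m') = A (k, j) (k', j') * A (i, m) (i', m')) :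
    ∃ (a : Matrix (Fin l) (Fin l) ℂ) (b : Matrix (Fin r) (Fin r) ℂ), A = a ⊗ₖ b := by
  obtain ⟨⟨k, m⟩, ⟨k', m'⟩, hc⟩ : ∃ p q, A p q ≠ 0 := by
    by_contra! h0
    exact hA (by ext p q; simpa using h0 p q)
  refine ⟨Matrix.of fun i i' => A (i, m) (i', m') / A (k, m) (k', m'),
    Matrix.of fun j j' => A (k, j) (k', j'), ?_⟩
  ext ⟨i, j⟩ ⟨i', j'⟩
  simp only [Matrix.kroneckerMap_apply, Matrix.of_apply]
  rw [div_mul_eq_mul_div, eq_div_iff hc, h, mul_comm]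

end Tensor

/-! ### Determinants of `u` and `v` -/

section Determinants

variable {α β γ : Type*} [Fintype α] [DecidableEq α] [Fintype β] [DecidableEq β]
  [Fintype γ] [DecidableEq γ]

lemma det_left_mul (e : β ≃ α) (A : Matrix α α ℂ) (u : Matrix α β ℂ) :
    ((A * u).submatrix e id).det = A.det * (u.submatrix e id).det := by
  rw [← Matrix.submatrix_mul_equiv A u e e id, Matrix.det_mul, Matrix.det_submatrix_equiv_self]

lemma det_left_mul' (e : β ≃ α) (u : Matrix α β ℂ) (o : Matrix β β ℂ) :
    ((u * o).submatrix e id).det = (u.submatrix e id).det * o.det := by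
  rw [Matrix.submatrix_mul u o e id id Function.bijective_id, Matrix.det_mul,
    Matrix.submatrix_id_id]

lemma det_right_mul (f : β ≃ γ) (v : Matrix β γ ℂ) (B : Matrix γ γ ℂ) :
    ((v * B).submatrix id f).det = (v.submatrix id f).det * B.det := by
  rw [← Matrix.submatrix_mul_equiv v B id f f, Matrix.det_mul, Matrix.det_submatrix_equiv_self]

lemma det_right_mul' (f : β ≃ γ) (p : Matrix β β ℂ) (v : Matrix β γ ℂ) :
    ((p * v).submatrix id f).det = p.det * (v.submatrix id f).det := by
  rw [Matrix.submatrix_mul p v id id f Function.bijective_id, Matrix.det_mul,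
    Matrix.submatrix_id_id]

lemma det_conj (M : Matrix β β ℂ) :
    (M.map (starRingEnd ℂ)).det = starRingEnd ℂ M.det :=
  (RingHom.map_det (starRingEnd ℂ) M).symm

lemma det_mul_conj_of_unitary {M : Matrix β β ℂ} (h : M * Mᴴ = 1) :
    M.det * starRingEnd ℂ M.det = 1 := by
  have := congrArg Matrix.det h
  rwa [Matrix.det_mul, Matrix.det_conjTranspose, Matrix.det_one] at this

lemma det_left_unitary (e : β ≃ α) {u : Matrix α β ℂ} (h : u * uᴴ = 1) :
    (u.submatrix e id).det * starRingEnd ℂ (u.submatrix e id).det = 1 := by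
  apply det_mul_conj_of_unitary
  rw [Matrix.conjTranspose_submatrix, ← Matrix.submatrix_mul u uᴴ e id e Function.bijective_id, h,
    Matrix.submatrix_one_equiv]

lemma det_right_unitary (f : β ≃ γ) {v : Matrix β γ ℂ} (h : v * vᴴ = 1) :
    (v.submatrix id f).det * starRingEnd ℂ (v.submatrix id f).det = 1 := by
  apply det_mul_conj_of_unitary
  rw [Matrix.conjTranspose_submatrix, Matrix.submatrix_mul_equiv v vᴴ id f id, h,
    Matrix.submatrix_id_id]

end Determinants

/-! ### The matrix `conj(u) u†` -/

section Cocycle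

variable {α β : Type*} [Fintype α] [DecidableEq α] [Fintype β] [DecidableEq β]

lemma cocycle_transpose (u : Matrix α β ℂ) : (cocycle u)ᵀ = cocycle u := by
  rw [cocycle, Matrix.transpose_mul]
  congr 1

lemma cocycle_mul {u : Matrix α β ℂ} (h : uᴴ * u = 1) :
    cocycle u * u = u.map (starRingEnd ℂ) := by
  rw [cocycle, Matrix.mul_assoc, h, Matrix.mul_one]

lemma det_cocycle_mul_sq (e : β ≃ α) {u : Matrix α β ℂ} (h : uᴴ * u = 1) (h' : u * uᴴ = 1) :
    (cocycle u).det * (u.submatrix e id).det ^ 2 = 1 := by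
  have h1 := det_left_mul e (cocycle u) u
  rw [cocycle_mul h, Matrix.submatrix_map, det_conj] at h1
  rw [sq, ← mul_assoc, ← h1, mul_comm]
  exact det_left_unitary e h'

lemma cocycle_ne_zero [Nonempty α] (e : β ≃ α) {u : Matrix α β ℂ} (h : uᴴ * u = 1)
    (h' : u * uᴴ = 1) : cocycle u ≠ 0 := by
  intro h0
  have := det_cocycle_mul_sq e h h'
  rw [h0, Matrix.det_zero, zero_mul] at this
  exact zero_ne_one this

lemma continuousOn_cocycle {u : ℝ → Matrix α β ℂ} {s : Set ℝ} (h : ContinuousOn u s) :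
    ContinuousOn (fun t => cocycle (u t)) s := by
  have : Continuous fun M : Matrix α β ℂ => cocycle M :=
    (continuous_id.matrix_map Complex.continuous_conj).matrix_mul continuous_id.matrix_conjTranspose
  exact this.comp_continuousOn h

end Cocycle

/-! ### Continuous invariants of a Kronecker product -/

section Invariants

lemma exists_entry_ne_zero {α β : Type*} {A : Matrix α β ℂ} (hA : A ≠ 0) :
    ∃ p q, A p q ≠ 0 := by
  by_contra! h0
  exact hA (by ext p q; simpa using h0 p q)

/-- A symmetric product `a ⊗ b ≠ 0` has a factor `a` which is symmetric or antisymmetric. -/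
lemma exists_sign {l r : ℕ} {a : Matrix (Fin l) (Fin l) ℂ} {b : Matrix (Fin r) (Fin r) ℂ}
    (hne : a ⊗ₖ b ≠ 0) (hsymm : (a ⊗ₖ b)ᵀ = a ⊗ₖ b) : ∃ c : ℂ, c ^ 2 = 1 ∧ aᵀ = c • a := by
  obtain ⟨⟨i, j⟩, ⟨i', j'⟩, h0⟩ := exists_entry_ne_zero hne
  rw [Matrix.kroneckerMap_apply] at h0
  have hs : ∀ x x', a x' x * b j' j = a x x' * b j j' := fun x x' => by
    simpa using congrFun (congrFun hsymm (x, j)) (x', j')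
  have hb : b j' j ≠ 0 := fun h => h0 (by rw [← hs, h, mul_zero])
  have ha : a i i' ≠ 0 := left_ne_zero_of_mul h0
  have hc : ∀ x x', a x' x = b j j' / b j' j * a x x' := fun x x' => by
    rw [div_mul_eq_mul_div, eq_div_iff hb, hs, mul_comm]
  refine ⟨b j j' / b j' j, ?_, ?_⟩
  · have h1 := hc i i'
    rw [hc i' i, ← mul_assoc, ← sq] at h1
    have h2 := hc i' i
    rw [hc i i', ← mul_assoc, ← sq] at h2
    exact mul_right_cancel₀ ha (by rw [one_mul]; exact h2.symm)
  · ext x x'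
    simpa using hc x x'

lemma sign_entry {l r : ℕ} {a : Matrix (Fin l) (Fin l) ℂ} {b : Matrix (Fin r) (Fin r) ℂ} {c : ℂ}
    (h : aᵀ = c • a) (p q : Fin l × Fin r) :
    (a ⊗ₖ b) (q.1, p.2) (p.1, q.2) = c * (a ⊗ₖ b) p q := by
  have := congrFun (congrFun h p.1) q.1
  simp only [Matrix.transpose_apply, Matrix.smul_apply, smul_eq_mul] at this
  simp [Matrix.kroneckerMap_apply, this, mul_assoc]

/-- `det(a)^s det(b)^t` written as a rational function of the matrix `M = a ⊗ b`, regular where the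
entry `M p q` does not vanish (see `detRoot_kronecker`). -/
noncomputable def detRoot {l r : ℕ} (s t : ℕ) (p q : Fin l × Fin r)
    (M : Matrix (Fin l × Fin r) (Fin l × Fin r) ℂ) : ℂ :=
  (M.submatrix (fun i => (i, p.2)) (fun i => (i, q.2))).det ^ s *
    (M.submatrix (fun j => (p.1, j)) (fun j => (q.1, j))).det ^ t / M p q ^ (l * s)

lemma detRoot_kronecker {l r s t : ℕ} (hst : l * s = r * t) (p q : Fin l × Fin r)
    (a : Matrix (Fin l) (Fin l) ℂ) (b : Matrix (Fin r) (Fin r) ℂ) (h : (a ⊗ₖ b) p q ≠ 0) :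
    detRoot s t p q (a ⊗ₖ b) = a.det ^ s * b.det ^ t := by
  have h1 : (a ⊗ₖ b).submatrix (fun i => (i, p.2)) (fun i => (i, q.2)) = b p.2 q.2 • a := by
    ext i j; simp [mul_comm]
  have h2 : (a ⊗ₖ b).submatrix (fun j => (p.1, j)) (fun j => (q.1, j)) = a p.1 q.1 • b := by
    ext i j; simp
  rw [detRoot, div_eq_iff (pow_ne_zero _ h), h1, h2, Matrix.det_smul, Matrix.det_smul,
    Fintype.card_fin, Fintype.card_fin, mul_pow, mul_pow, ← pow_mul, ← pow_mul, ← hst,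
    Matrix.kroneckerMap_apply, mul_pow]
  ring

lemma continuousAt_detRoot {l r s t : ℕ} (p q : Fin l × Fin r)
    {M : Matrix (Fin l × Fin r) (Fin l × Fin r) ℂ} (h : M p q ≠ 0) :
    ContinuousAt (detRoot s t p q) M := by
  unfold detRoot
  refine ContinuousAt.div ?_ ?_ (pow_ne_zero _ h)
  · exact (((continuous_id.matrix_submatrix _ _).matrix_det.pow _).mul
      ((continuous_id.matrix_submatrix _ _).matrix_det.pow _)).continuousAt
  · exact ((continuous_id.matrix_elem p q).pow _).continuousAt

/-- A function of a nonvanishing matrix path is continuous if, for each `(p, q)`, it is given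
by a continuous expression in the matrix wherever the `(p, q)` entry is nonzero. -/
lemma continuousOn_of_entry {α : Type*} {A : ℝ → Matrix α α ℂ} {I : Set ℝ}
    (hA : ContinuousOn A I) (hne : ∀ t ∈ I, A t ≠ 0) (f : ℝ → ℂ) (F : α → α → Matrix α α ℂ → ℂ)
    (hF : ∀ p q M, M p q ≠ 0 → ContinuousAt (F p q) M)
    (hf : ∀ t ∈ I, ∀ p q, A t p q ≠ 0 → f t = F p q (A t)) : ContinuousOn f I := by
  intro t ht
  obtain ⟨p, q, hpq⟩ := exists_entry_ne_zero (hne t ht)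
  have hent : ContinuousWithinAt (fun x => A x p q) I t :=
    (continuous_id.matrix_elem p q).continuousAt.comp_continuousWithinAt (hA t ht)
  refine ContinuousWithinAt.congr_of_eventuallyEq (f := fun x => F p q (A x))
    ((hF p q _ hpq).comp_continuousWithinAt (hA t ht)) ?_ (hf t ht p q hpq)
  filter_upwards [hent.eventually_ne hpq, self_mem_nhdsWithin] with x hx hxI
  exact hf x hxI p q hx

lemma eq_of_sq_eq_one {f : ℝ → ℂ} (hf : ContinuousOn f (Set.Icc 0 1))
    (hsq : ∀ t ∈ Set.Icc (0 : ℝ) 1, f t ^ 2 = 1) : f 0 = f 1 := by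
  have h0 : (0 : ℝ) ∈ Set.Icc (0 : ℝ) 1 := by simp
  have h1 : (1 : ℝ) ∈ Set.Icc (0 : ℝ) 1 := by simp
  rcases isPreconnected_Icc.eq_one_or_eq_neg_one_of_sq_eq hf (fun t ht => hsq t ht) with h | h
  · rw [h h0, h h1]; rfl
  · rw [h h0, h h1]; rfl

end Invariants

/-! ### The two normal forms -/

section Forms

/-- The properties shared by `1` (with `ε = 1`) and `Σ_n`, `n` even (with `ε = -1`). -/
structure IsForm (ε : ℂ) {n : ℕ} (σ : Matrix (Fin n) (Fin n) ℂ) : Prop where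
  transpose : σᵀ = ε • σ
  conj : σ.map (starRingEnd ℂ) = σ
  sq : σ * σ = ε • 1
  det : σ.det = 1

lemma isForm_one (n : ℕ) : IsForm 1 (1 : Matrix (Fin n) (Fin n) ℂ) where
  transpose := by simp
  conj := by ext i j; by_cases h : i = j <;> simp [Matrix.one_apply, h]
  sq := by simp
  det := by simp

lemma stdSymplectic_eq (k : ℕ) :
    (stdSymplectic (k * 2)).submatrix finProdFinEquiv finProdFinEquiv =
      (1 : Matrix (Fin k) (Fin k) ℂ) ⊗ₖ !![0, 1; -1, 0] := by
  ext ⟨i, a⟩ ⟨j, b⟩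
  have hij : i = j ↔ i.val = j.val := Fin.ext_iff
  fin_cases a <;> fin_cases b <;>
    simp [stdSymplectic, Matrix.one_apply, hij] <;> grind

lemma isForm_std {n : ℕ} (hn : Even n) : IsForm (-1) (stdSymplectic n) := by
  obtain ⟨k, rfl⟩ := hn
  rw [← mul_two]
  have h := stdSymplectic_eq k
  have hinj : Function.Injective fun M : Matrix (Fin (k * 2)) (Fin (k * 2)) ℂ =>
      M.submatrix (finProdFinEquiv : Fin k × Fin 2 ≃ _) finProdFinEquiv :=
    (Matrix.reindex (finProdFinEquiv : Fin k × Fin 2 ≃ _).symm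
      (finProdFinEquiv : Fin k × Fin 2 ≃ _).symm).injective
  refine ⟨?_, ?_, ?_, ?_⟩
  · ext i j
    simp only [stdSymplectic, Matrix.transpose_apply, Matrix.of_apply, Matrix.smul_apply,
      smul_eq_mul]
    split_ifs <;> first | omega | simp
  · ext i j
    simp only [stdSymplectic, Matrix.map_apply, Matrix.of_apply]
    split_ifs <;> simp
  · apply hinj
    simp only
    rw [← Matrix.submatrix_mul_equiv _ _ _ finProdFinEquiv _, h, ← Matrix.mul_kronecker_mul]
    have hY : !![(0 : ℂ), 1; -1, 0] * !![0, 1; -1, 0] = (-1 : ℂ) • 1 := by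
      ext a b; fin_cases a <;> fin_cases b <;> simp
    rw [hY, Matrix.one_mul, Matrix.kronecker_smul, Matrix.one_kronecker_one]
    ext p q
    simp only [Matrix.smul_apply, Matrix.submatrix_apply, Matrix.one_apply,
      EmbeddingLike.apply_eq_iff_eq]
  · rw [← Matrix.det_submatrix_equiv_self (finProdFinEquiv : Fin k × Fin 2 ≃ _), h,
      Matrix.det_kronecker]
    simp [Matrix.det_fin_two]

/-- Common shape of the two cases: `conj(u) = (σ ⊗ τ) u` and `conj(v) = v (τ ⊗ σ)`. -/
def HasForm (d l r : ℕ) (ε : ℂ) (u : Matrix (Fin l × Fin r) (Fin d × Fin d) ℂ)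
    (v : Matrix (Fin d × Fin d) (Fin r × Fin l) ℂ) (σ : Matrix (Fin l) (Fin l) ℂ)
    (τ : Matrix (Fin r) (Fin r) ℂ) : Prop :=
  IsForm ε σ ∧ IsForm ε τ ∧ u.map (starRingEnd ℂ) = (σ ⊗ₖ τ) * u ∧
    v.map (starRingEnd ℂ) = v * (τ ⊗ₖ σ)

lemma CaseI.hasForm {d l r : ℕ} {u : Matrix (Fin l × Fin r) (Fin d × Fin d) ℂ}
    {v : Matrix (Fin d × Fin d) (Fin r × Fin l) ℂ} (h : CaseI d l r u v) :
    HasForm d l r 1 u v 1 1 :=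
  ⟨isForm_one l, isForm_one r, by simpa using h.1, by simpa using h.2⟩

lemma CaseII.hasForm {d l r : ℕ} {u : Matrix (Fin l × Fin r) (Fin d × Fin d) ℂ}
    {v : Matrix (Fin d × Fin d) (Fin r × Fin l) ℂ} (hl : Even l) (hr : Even r)
    (h : CaseII d l r u v) : HasForm d l r (-1) u v (stdSymplectic l) (stdSymplectic r) :=
  ⟨isForm_std hl, isForm_std hr, h.1, h.2⟩

end Forms

/-! ### Invariants along a path -/

section Forward

/-- The equivalence between `ℂ^d ⊗ ℂ^d` and `ℂ^r ⊗ ℂ^ℓ` indices used to make `v` square. -/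
def eqDDswap (d l r : ℕ) (h : r * l = d ^ 2) : (Fin d × Fin d) ≃ (Fin r × Fin l) :=
  (eqDD d l r h).trans (Equiv.prodComm _ _)

/-- The product of the two determinants is a sign: `det(u)⁻²` and `det(v)²` both equal
`det(conj(u) u†)`, since `conj(u) u†` and `vᵀ v` agree up to the swap of the tensor factors. -/
lemma det_mul_det_sq {d l r : ℕ} (hrl : r * l = d ^ 2)
    {u : Matrix (Fin l × Fin r) (Fin d × Fin d) ℂ}
    {v : Matrix (Fin d × Fin d) (Fin r × Fin l) ℂ} (hU : IsUnitaryPair d l r u v)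
    (hC : ConjInvariant d l r u v) :
    ((u.submatrix (eqDD d l r hrl) id).det * (v.submatrix id (eqDDswap d l r hrl)).det) ^ 2
      = 1 := by
  have h1 : cocycle u = (vᵀ * v).submatrix (Equiv.prodComm _ _) (Equiv.prodComm _ _) := by
    ext z z'
    rw [cocycle_eq_swap hU hC]
    rfl
  have h2 : (cocycle u).det = (v.submatrix id (eqDDswap d l r hrl)).det ^ 2 := by
    rw [h1, Matrix.det_submatrix_equiv_self,
      ← Matrix.det_submatrix_equiv_self (eqDDswap d l r hrl),
      Matrix.submatrix_mul vᵀ v _ id _ Function.bijective_id, Matrix.det_mul,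
      ← Matrix.transpose_submatrix, Matrix.det_transpose, sq]
  rw [mul_pow, mul_comm, ← h2]
  exact det_cocycle_mul_sq _ hU.1 hU.2.1

/-- A gauge transformation `(x, y)` replaces `σ ⊗ τ` by `conj(x) σ x† ⊗ conj(y) τ y†`. The sign `ε`,
the number `det(a)^(r/2) det(b)^(ℓ/2) det(u)` and the product `det(u) det(v)` are unaffected; for
the pair in normal form the second one is `det(u₁)`, because `det(σ) = det(τ) = 1`. -/
lemma endpoint {d l r s t : ℕ} (hrl : r * l = d ^ 2) (hs : r = s + s) (ht : l = t + t) {ε : ℂ}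
    {u₁ : Matrix (Fin l × Fin r) (Fin d × Fin d) ℂ}
    {v₁ : Matrix (Fin d × Fin d) (Fin r × Fin l) ℂ}
    {σ : Matrix (Fin l) (Fin l) ℂ} {τ : Matrix (Fin r) (Fin r) ℂ}
    (hU : IsUnitaryPair d l r u₁ v₁) (hf : HasForm d l r ε u₁ v₁ σ τ)
    {u : Matrix (Fin l × Fin r) (Fin d × Fin d) ℂ}
    {v : Matrix (Fin d × Fin d) (Fin r × Fin l) ℂ} (hg : GaugeRelated d l r u₁ v₁ u v) :
    ∃ (a : Matrix (Fin l) (Fin l) ℂ) (b : Matrix (Fin r) (Fin r) ℂ),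
      cocycle u = a ⊗ₖ b ∧ aᵀ = ε • a ∧
      a.det ^ s * b.det ^ t * (u.submatrix (eqDD d l r hrl) id).det =
        (u₁.submatrix (eqDD d l r hrl) id).det ∧
      (u.submatrix (eqDD d l r hrl) id).det * (v.submatrix id (eqDDswap d l r hrl)).det =
        (u₁.submatrix (eqDD d l r hrl) id).det *
          (v₁.submatrix id (eqDDswap d l r hrl)).det := by
  have hpr : ∀ z : ℂ, z ^ r = z ^ s * z ^ s := fun z => by rw [hs, pow_add]
  have hpl : ∀ z : ℂ, z ^ l = z ^ t * z ^ t := fun z => by rw [ht, pow_add]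
  obtain ⟨x, y, hx, hy, rfl, rfl⟩ := hg
  obtain ⟨hσ, hτ, hu, hv⟩ := hf
  have hx' : x.det * starRingEnd ℂ x.det = 1 :=
    det_mul_conj_of_unitary (Matrix.mem_unitaryGroup_iff.mp hx)
  have hy' : y.det * starRingEnd ℂ y.det = 1 :=
    det_mul_conj_of_unitary (Matrix.mem_unitaryGroup_iff.mp hy)
  refine ⟨x.map (starRingEnd ℂ) * σ * xᴴ, y.map (starRingEnd ℂ) * τ * yᴴ, ?_, ?_, ?_, ?_⟩
  · have hk : (x ⊗ₖ y).map (starRingEnd ℂ) =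
        x.map (starRingEnd ℂ) ⊗ₖ y.map (starRingEnd ℂ) := by
      ext p q; simp
    rw [cocycle, Matrix.map_mul, hk, hu, Matrix.conjTranspose_mul, Matrix.conjTranspose_kronecker,
      Matrix.mul_kronecker_mul, Matrix.mul_kronecker_mul]
    simp only [Matrix.mul_assoc]
    rw [← Matrix.mul_assoc u₁, hU.2.1, Matrix.one_mul]
  · rw [Matrix.transpose_mul, Matrix.transpose_mul, hσ.transpose, Matrix.smul_mul, Matrix.mul_smul,
      Matrix.mul_assoc]
    congr 1
  · rw [det_left_mul, Matrix.det_kronecker, Matrix.det_mul, Matrix.det_mul, Matrix.det_mul,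
      Matrix.det_mul, hσ.det, hτ.det, det_conj, det_conj, Matrix.det_conjTranspose,
      Matrix.det_conjTranspose, Fintype.card_fin, Fintype.card_fin, hpr, hpl]
    change (_ * 1 * starRingEnd ℂ x.det) ^ s * (_ * 1 * starRingEnd ℂ y.det) ^ t * _ = _
    calc _ = ((x.det * starRingEnd ℂ x.det) ^ s) ^ 2 * ((y.det * starRingEnd ℂ y.det) ^ t) ^ 2 *
          (u₁.submatrix (eqDD d l r hrl) id).det := by
          ring
      _ = _ := by rw [hx', hy']; simp
  · rw [det_left_mul, det_right_mul, Matrix.det_kronecker, Matrix.det_kronecker,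
      Matrix.det_conjTranspose, Matrix.det_conjTranspose, Fintype.card_fin, Fintype.card_fin]
    change _ * _ * (_ * ((starRingEnd ℂ y.det) ^ l * (starRingEnd ℂ x.det) ^ r)) = _
    calc _ = (x.det * starRingEnd ℂ x.det) ^ r * (y.det * starRingEnd ℂ y.det) ^ l *
          ((u₁.submatrix (eqDD d l r hrl) id).det *
            (v₁.submatrix id (eqDDswap d l r hrl)).det) := by ring
      _ = _ := by rw [hx', hy']; simp

/-- Along a path of conjugation-invariant pairs `conj(u) u† = a ⊗ b`, and the sign of `a` under
transposition, `det(a)^(r/2) det(b)^(ℓ/2) det(u)` and `det(u) det(v)` are continuous with values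
`±1`, hence constant. -/
lemma forward {d l r : ℕ} (hl : 1 ≤ l) (hr : 1 ≤ r) (hrl : r * l = d ^ 2)
    (hevenr : Even r) (hevenl : Even l) {ε₁ ε₂ : ℂ}
    {u₁ u₂ : Matrix (Fin l × Fin r) (Fin d × Fin d) ℂ}
    {v₁ v₂ : Matrix (Fin d × Fin d) (Fin r × Fin l) ℂ}
    {σ₁ σ₂ : Matrix (Fin l) (Fin l) ℂ} {τ₁ τ₂ : Matrix (Fin r) (Fin r) ℂ}
    (hU₁ : IsUnitaryPair d l r u₁ v₁) (hU₂ : IsUnitaryPair d l r u₂ v₂)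
    (hf₁ : HasForm d l r ε₁ u₁ v₁ σ₁ τ₁) (hf₂ : HasForm d l r ε₂ u₂ v₂ σ₂ τ₂)
    (h : StrictEquivConj d l r u₁ v₁ u₂ v₂) :
    ε₁ = ε₂ ∧
      (u₁.submatrix (eqDD d l r hrl) id).det = (u₂.submatrix (eqDD d l r hrl) id).det ∧
      (v₁.submatrix id (eqDDswap d l r hrl)).det =
        (v₂.submatrix id (eqDDswap d l r hrl)).det := by
  obtain ⟨u, v, hcu, hcv, hU, hg₁, hg₂, hC⟩ := h
  obtain ⟨s, hs⟩ := hevenr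
  obtain ⟨t, ht⟩ := hevenl
  have : Nonempty (Fin l × Fin r) := ⟨(⟨0, hl⟩, ⟨0, hr⟩)⟩
  have hpr : ∀ z : ℂ, z ^ r = z ^ s * z ^ s := fun z => by rw [hs, pow_add]
  have hpl : ∀ z : ℂ, z ^ l = z ^ t * z ^ t := fun z => by rw [ht, pow_add]
  have hst : l * s = r * t := by rw [hs, ht]; ring
  have m0 : (0 : ℝ) ∈ Set.Icc (0 : ℝ) 1 := by simp
  have m1 : (1 : ℝ) ∈ Set.Icc (0 : ℝ) 1 := by simp
  have hne : ∀ x ∈ Set.Icc (0 : ℝ) 1, cocycle (u x) ≠ 0 := fun x hx =>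
    cocycle_ne_zero (eqDD d l r hrl) (hU x hx).1 (hU x hx).2.1
  have hcA := continuousOn_cocycle hcu
  have hcdet : ContinuousOn (fun x => ((u x).submatrix (eqDD d l r hrl) id).det)
      (Set.Icc 0 1) := by
    have : Continuous fun M : Matrix (Fin l × Fin r) (Fin d × Fin d) ℂ =>
      (M.submatrix (eqDD d l r hrl) id).det := (continuous_id.matrix_submatrix _ _).matrix_det
    exact this.comp_continuousOn hcu
  have hcdet' : ContinuousOn (fun x => ((v x).submatrix id (eqDDswap d l r hrl)).det)
      (Set.Icc 0 1) := by
    have : Continuous fun M : Matrix (Fin d × Fin d) (Fin r × Fin l) ℂ =>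
      (M.submatrix id (eqDDswap d l r hrl)).det := (continuous_id.matrix_submatrix _ _).matrix_det
    exact this.comp_continuousOn hcv
  have hex : ∀ x ∈ Set.Icc (0 : ℝ) 1, ∃ (a : Matrix (Fin l) (Fin l) ℂ)
      (b : Matrix (Fin r) (Fin r) ℂ) (c : ℂ), cocycle (u x) = a ⊗ₖ b ∧ c ^ 2 = 1 ∧ aᵀ = c • a := by
    intro x hx
    obtain ⟨a, b, hab⟩ := exists_kronecker (hne x hx) (schmidt_one (hU x hx) (hC x hx))
    obtain ⟨c, hc⟩ := exists_sign (hab ▸ hne x hx) (hab ▸ cocycle_transpose (u x))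
    exact ⟨a, b, c, hab, hc⟩
  choose! a b c hab hc hac using hex
  obtain ⟨a₀, b₀, hA₀, hε₀, hδ₀, hD₀⟩ := endpoint hrl hs ht hU₁ hf₁ hg₁
  obtain ⟨a₁, b₁, hA₁, hε₁, hδ₁, hD₁⟩ := endpoint hrl hs ht hU₂ hf₂ hg₂
  -- `c x` is the sign of the factor `a x` under transposition; it depends on `a x ⊗ b x` only.
  have hsign : c 0 = c 1 := by
    refine eq_of_sq_eq_one ?_ hc
    refine continuousOn_of_entry hcA hne c (fun p q M => M (q.1, p.2) (p.1, q.2) / M p q) ?_ ?_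
    · intro p q M hM
      exact (continuous_id.matrix_elem _ _).continuousAt.div
        (continuous_id.matrix_elem _ _).continuousAt hM
    · intro x hx p q hpq
      rw [eq_div_iff hpq, hab x hx, sign_entry (hac x hx)]
  have hsign' : ∀ x ∈ Set.Icc (0 : ℝ) 1, ∀ (a' : Matrix (Fin l) (Fin l) ℂ)
      (b' : Matrix (Fin r) (Fin r) ℂ) (ε : ℂ), cocycle (u x) = a' ⊗ₖ b' → a'ᵀ = ε • a' →
      c x = ε := by
    intro x hx a' b' ε h1 h2
    obtain ⟨p, q, hpq⟩ := exists_entry_ne_zero (hne x hx)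
    have e1 := sign_entry (b := b x) (hac x hx) p q
    have e2 := sign_entry (b := b') h2 p q
    rw [← hab x hx] at e1
    rw [← h1] at e2
    exact mul_right_cancel₀ hpq (e1.symm.trans e2)
  -- `det(a)^s det(b)^t` is a square root of `det(conj(u) u†)` which depends on `a ⊗ b` only, so it is
  -- continuous although `a` and `b` are chosen separately for each parameter value.
  have huniq : ∀ x ∈ Set.Icc (0 : ℝ) 1, ∀ (a' : Matrix (Fin l) (Fin l) ℂ)
      (b' : Matrix (Fin r) (Fin r) ℂ), cocycle (u x) = a' ⊗ₖ b' →
      (a x).det ^ s * (b x).det ^ t = a'.det ^ s * b'.det ^ t := by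
    intro x hx a' b' h1
    obtain ⟨p, q, hpq⟩ := exists_entry_ne_zero (hne x hx)
    rw [← detRoot_kronecker hst p q (a x) (b x) (hab x hx ▸ hpq),
      ← detRoot_kronecker hst p q a' b' (h1 ▸ hpq), ← hab x hx, ← h1]
  have hdelta : ContinuousOn (fun x => (a x).det ^ s * (b x).det ^ t) (Set.Icc 0 1) := by
    refine continuousOn_of_entry hcA hne _ (detRoot s t)
      (fun p q M hM => continuousAt_detRoot p q hM) ?_
    intro x hx p q hpq
    rw [hab x hx] at hpq ⊢
    exact (detRoot_kronecker hst p q _ _ hpq).symm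
  have hu := eq_of_sq_eq_one (hdelta.mul hcdet) (by
    intro x hx
    have h1 := det_cocycle_mul_sq (eqDD d l r hrl) (hU x hx).1 (hU x hx).2.1
    rw [hab x hx, Matrix.det_kronecker, Fintype.card_fin, Fintype.card_fin] at h1
    rw [← h1, hpr, hpl, Pi.mul_apply]
    ring)
  have hv := eq_of_sq_eq_one (hcdet.mul hcdet') (fun x hx =>
    det_mul_det_sq hrl (hU x hx) (hC x hx))
  simp only [Pi.mul_apply] at hu hv
  rw [huniq 0 m0 a₀ b₀ hA₀, huniq 1 m1 a₁ b₁ hA₁, hδ₀, hδ₁] at hu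
  rw [hD₀, hD₁, hu] at hv
  refine ⟨?_, hu, ?_⟩
  · rw [← hsign' 0 m0 a₀ b₀ ε₁ hA₀ hε₀, ← hsign' 1 m1 a₁ b₁ ε₂ hA₁ hε₁, hsign]
  · exact mul_left_cancel₀ (left_ne_zero_of_mul_eq_one
      (det_left_unitary (eqDD d l r hrl) hU₂.2.1)) hv

end Forward

/-! ### Construction of paths -/

section Backward

/-- Two pairs of the same form are related by `u₂ = u₁ o`, `v₂ = p v₁` with `o`, `p` real orthogonal
of determinant one; paths from `1` to `o` and `p` preserve the form. -/
lemma backward {d l r : ℕ} (hrl : r * l = d ^ 2) (hd : 1 < d) {ε : ℂ} (hε : ε * ε = 1)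
    {u₁ u₂ : Matrix (Fin l × Fin r) (Fin d × Fin d) ℂ}
    {v₁ v₂ : Matrix (Fin d × Fin d) (Fin r × Fin l) ℂ}
    {σ : Matrix (Fin l) (Fin l) ℂ} {τ : Matrix (Fin r) (Fin r) ℂ}
    (hU₁ : IsUnitaryPair d l r u₁ v₁) (hU₂ : IsUnitaryPair d l r u₂ v₂)
    (hf₁ : HasForm d l r ε u₁ v₁ σ τ) (hf₂ : HasForm d l r ε u₂ v₂ σ τ)
    (hdu : (u₁.submatrix (eqDD d l r hrl) id).det = (u₂.submatrix (eqDD d l r hrl) id).det)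
    (hdv : (v₁.submatrix id (eqDDswap d l r hrl)).det =
        (v₂.submatrix id (eqDDswap d l r hrl)).det) :
    StrictEquivConj d l r u₁ v₁ u₂ v₂ := by
  obtain ⟨hσ, hτ, hu₁, hv₁⟩ := hf₁
  obtain ⟨-, -, hu₂, hv₂⟩ := hf₂
  obtain ⟨a1, a2, a3, a4⟩ := hU₁
  obtain ⟨b1, b2, b3, b4⟩ := hU₂
  have hcT : ∀ {α β : Type} (M : Matrix α β ℂ),
      Mᴴ.map (starRingEnd ℂ) = (M.map (starRingEnd ℂ))ᴴ := fun M => by ext i j; simp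
  have hherm : ∀ {n : ℕ} {ρ : Matrix (Fin n) (Fin n) ℂ}, IsForm ε ρ → ρᴴ = ε • ρ := by
    intro n ρ h
    rw [← h.transpose]
    conv_rhs => rw [← h.conj]
    rfl
  have hS : (σ ⊗ₖ τ) * (σ ⊗ₖ τ) = 1 := by
    rw [← Matrix.mul_kronecker_mul, hσ.sq, hτ.sq, Matrix.smul_kronecker, Matrix.kronecker_smul,
      smul_smul, hε, one_smul, Matrix.one_kronecker_one]
  have hS' : (τ ⊗ₖ σ) * (τ ⊗ₖ σ) = 1 := by
    rw [← Matrix.mul_kronecker_mul, hσ.sq, hτ.sq, Matrix.smul_kronecker, Matrix.kronecker_smul,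
      smul_smul, hε, one_smul, Matrix.one_kronecker_one]
  have hSh : (σ ⊗ₖ τ)ᴴ = σ ⊗ₖ τ := by
    rw [Matrix.conjTranspose_kronecker, hherm hσ, hherm hτ, Matrix.smul_kronecker,
      Matrix.kronecker_smul, smul_smul, hε, one_smul]
  have hSh' : (τ ⊗ₖ σ)ᴴ = τ ⊗ₖ σ := by
    rw [Matrix.conjTranspose_kronecker, hherm hσ, hherm hτ, Matrix.smul_kronecker,
      Matrix.kronecker_smul, smul_smul, hε, one_smul]
  have hcard : 1 < Fintype.card (Fin d × Fin d) := by
    rw [Fintype.card_prod, Fintype.card_fin]; nlinarith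
  -- Real orthogonal matrices `o = u₁† u₂` and `p = v₂ v₁†`; in `conj(o)` and `conj(p)` the
  -- involutions `σ ⊗ τ` and `τ ⊗ σ` cancel.
  obtain ⟨f, hfc, hf0, hf1, hf⟩ := exists_real_path hcard (u₁ᴴ * u₂)
    (by
      rw [Matrix.map_mul, hcT, hu₁, hu₂, Matrix.conjTranspose_mul, hSh, Matrix.mul_assoc,
        ← Matrix.mul_assoc (σ ⊗ₖ τ), hS, Matrix.one_mul])
    (by
      rw [Matrix.conjTranspose_mul, Matrix.conjTranspose_conjTranspose, Matrix.mul_assoc,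
        ← Matrix.mul_assoc u₂, b2, Matrix.one_mul, a1])
    (by
      have h1 := det_left_mul' (eqDD d l r hrl) u₁ (u₁ᴴ * u₂)
      rw [← Matrix.mul_assoc, a2, Matrix.one_mul, ← hdu] at h1
      exact (mul_eq_left₀ (left_ne_zero_of_mul_eq_one (det_left_unitary (eqDD d l r hrl) a2))).mp
        h1.symm)
  obtain ⟨g, hgc, hg0, hg1, hg⟩ := exists_real_path hcard (v₂ * v₁ᴴ)
    (by
      rw [Matrix.map_mul, hcT, hv₁, hv₂, Matrix.conjTranspose_mul, hSh', Matrix.mul_assoc,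
        ← Matrix.mul_assoc (τ ⊗ₖ σ), hS', Matrix.one_mul])
    (by
      rw [Matrix.conjTranspose_mul, Matrix.conjTranspose_conjTranspose, Matrix.mul_assoc,
        ← Matrix.mul_assoc v₁ᴴ, a3, Matrix.one_mul, b4])
    (by
      have h1 := det_right_mul' (eqDDswap d l r hrl) (v₂ * v₁ᴴ) v₁
      rw [Matrix.mul_assoc, a3, Matrix.mul_one, ← hdv] at h1
      exact (mul_eq_right₀ (left_ne_zero_of_mul_eq_one
        (det_right_unitary (eqDDswap d l r hrl) a4))).mp h1.symm)
  have hgauge : ∀ (u : Matrix (Fin l × Fin r) (Fin d × Fin d) ℂ)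
      (v : Matrix (Fin d × Fin d) (Fin r × Fin l) ℂ), GaugeRelated d l r u v u v := fun u v =>
    ⟨1, 1, one_mem _, one_mem _, by simp, by simp⟩
  refine ⟨fun t => u₁ * f t, fun t => g t * v₁, ?_, ?_, ?_, ?_, ?_, ?_⟩
  · exact (continuous_const.matrix_mul hfc).continuousOn
  · exact (hgc.matrix_mul continuous_const).continuousOn
  · intro t _
    have hf' := mul_eq_one_comm.mp (hf t).2
    have hg' := mul_eq_one_comm.mp (hg t).2
    refine ⟨?_, ?_, ?_, ?_⟩
    · rw [Matrix.conjTranspose_mul, Matrix.mul_assoc, ← Matrix.mul_assoc u₁ᴴ, a1, Matrix.one_mul,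
        hf']
    · rw [Matrix.conjTranspose_mul, Matrix.mul_assoc, ← Matrix.mul_assoc (f t), (hf t).2,
        Matrix.one_mul, a2]
    · rw [Matrix.conjTranspose_mul, Matrix.mul_assoc, ← Matrix.mul_assoc (g t)ᴴ, hg',
        Matrix.one_mul, a3]
    · rw [Matrix.conjTranspose_mul, Matrix.mul_assoc, ← Matrix.mul_assoc v₁, a4, Matrix.one_mul,
        (hg t).2]
  · simp only [hf0, hg0, Matrix.mul_one, Matrix.one_mul]
    exact hgauge u₁ v₁
  · simp only [hf1, hg1]
    rw [← Matrix.mul_assoc, a2, Matrix.one_mul, Matrix.mul_assoc, a3, Matrix.mul_one]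
    exact hgauge u₂ v₂
  · intro t _
    refine conjInvariant_of_form hS ?_ ?_
    · rw [Matrix.map_mul, hu₁, (hf t).1, Matrix.mul_assoc]
    · rw [Matrix.map_mul, hv₁, (hg t).1, Matrix.mul_assoc]

end Backward

/-- For `r`, `ℓ` both even, two conjugation-invariant brickwork MPUs whose pairs are in
normal form (Case I or Case II) are strictly equivalent under conjugation iff they belong
to the same case and have equal determinants `det u₁ = det u₂`, `det v₁ = det v₂`. -/
theorem stmt14 (d l r : ℕ) (hd : 1 ≤ d) (hl : 1 ≤ l) (hr : 1 ≤ r) (hrl : r * l = d ^ 2)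
    (hevenr : Even r) (hevenl : Even l)
    (u₁ : Matrix (Fin l × Fin r) (Fin d × Fin d) ℂ)
    (v₁ : Matrix (Fin d × Fin d) (Fin r × Fin l) ℂ)
    (u₂ : Matrix (Fin l × Fin r) (Fin d × Fin d) ℂ)
    (v₂ : Matrix (Fin d × Fin d) (Fin r × Fin l) ℂ)
    (hu₁ : IsUnitaryPair d l r u₁ v₁) (hu₂ : IsUnitaryPair d l r u₂ v₂)
    (hc₁ : ConjInvariant d l r u₁ v₁) (hc₂ : ConjInvariant d l r u₂ v₂)
    (hcase₁ : CaseI d l r u₁ v₁ ∨ CaseII d l r u₁ v₁)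
    (hcase₂ : CaseI d l r u₂ v₂ ∨ CaseII d l r u₂ v₂) :
    StrictEquivConj d l r u₁ v₁ u₂ v₂ ↔
      (((CaseI d l r u₁ v₁ ∧ CaseI d l r u₂ v₂) ∨ (CaseII d l r u₁ v₁ ∧ CaseII d l r u₂ v₂)) ∧
        (u₁.submatrix (eqDD d l r hrl) id).det = (u₂.submatrix (eqDD d l r hrl) id).det ∧
        (v₁.submatrix id (fun p => Prod.swap (eqDD d l r hrl p))).det =
          (v₂.submatrix id (fun p => Prod.swap (eqDD d l r hrl p))).det) := by
  have hd2 : 1 < d := by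
    obtain ⟨k, rfl⟩ := hevenr
    by_contra hlt
    obtain rfl : d = 1 := by omega
    rw [one_pow] at hrl
    have := Nat.eq_one_of_mul_eq_one_right hrl
    omega
  constructor
  · intro h
    rcases hcase₁ with c₁ | c₁ <;> rcases hcase₂ with c₂ | c₂
    · exact ⟨Or.inl ⟨c₁, c₂⟩,
        (forward hl hr hrl hevenr hevenl hu₁ hu₂ c₁.hasForm c₂.hasForm h).2⟩
    · have := (forward hl hr hrl hevenr hevenl hu₁ hu₂ c₁.hasForm
        (c₂.hasForm hevenl hevenr) h).1
      norm_num at this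
    · have := (forward hl hr hrl hevenr hevenl hu₁ hu₂ (c₁.hasForm hevenl hevenr)
        c₂.hasForm h).1
      norm_num at this
    · exact ⟨Or.inr ⟨c₁, c₂⟩, (forward hl hr hrl hevenr hevenl hu₁ hu₂
        (c₁.hasForm hevenl hevenr) (c₂.hasForm hevenl hevenr) h).2⟩
  · rintro ⟨⟨c₁, c₂⟩ | ⟨c₁, c₂⟩, hdu, hdv⟩
    · exact backward hrl hd2 (by norm_num) hu₁ hu₂ c₁.hasForm c₂.hasForm hdu hdv
    · exact backward hrl hd2 (by norm_num) hu₁ hu₂ (c₁.hasForm hevenl hevenr)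
        (c₂.hasForm hevenl hevenr) hdu hdv
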